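/- Let c_n^{+,−} = E_n^sep(A_n^{+,−} | B_1^{+,n}=n), the average of A_n^{+,−}(σ) over indecomposable σ ∈ SEP(n). Then for every real t with |t| < 3 − 2√2, the series G^{+,−}(t) = ∑_{n=1}^∞ s_n c_n^{+,−} t^n converges and G^{+,−}(t) = t(1−t)/√(t² − 6t + 1). -/

import Mathlib

open Finset Filter Real
open scoped Classical

/-- `σ` contains the pattern `τ` (a permutation of `Fin k` given as a function). -/
def ContainsPattern {n k : ℕ} (σ : Equiv.Perm (Fin n)) (τ : Fin k → Fin k) : Prop :=
  ∃ f : Fin k → Fin n, StrictMono f ∧ ∀ a b : Fin k, τ a < τ b ↔ σ (f a) < σ (f b)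

/-- A permutation is separable iff it avoids the patterns 2413 and 3142. -/
def Separable {n : ℕ} (σ : Equiv.Perm (Fin n)) : Prop :=
  ¬ ContainsPattern σ (![1, 3, 0, 2] : Fin 4 → Fin 4) ∧
  ¬ ContainsPattern σ (![2, 0, 3, 1] : Fin 4 → Fin 4)

/-- The set of separable permutations of `[n]`. -/
noncomputable def SEP (n : ℕ) : Finset (Equiv.Perm (Fin n)) :=
  Finset.univ.filter fun σ => Separable σ

/-- `IsAltSeq σ s l` : `l` is a strictly increasing list of indices along which the values of `σ`
alternate, starting with an ascent if `s = true` and starting with a descent if `s = false`. -/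
def IsAltSeq {n : ℕ} (σ : Equiv.Perm (Fin n)) (s : Bool) (l : List (Fin n)) : Prop :=
  l.Chain' (· < ·) ∧
  ∀ j : ℕ, ∀ hj : j + 1 < l.length,
    if decide (j % 2 = 0) = s then
      σ (l.get ⟨j, Nat.lt_of_succ_lt hj⟩) < σ (l.get ⟨j + 1, hj⟩)
    else
      σ (l.get ⟨j + 1, hj⟩) < σ (l.get ⟨j, Nat.lt_of_succ_lt hj⟩)

/-- The length of the longest alternating subsequence of `σ` of type `(s, e)`, where
`true` stands for ascent and `false` for descent.  An alternating subsequence starting with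
an ascent ends with a descent iff its length is odd (and similarly in the other cases), so the
type is encoded by the parity constraint; a singleton counts as a subsequence of types
`(+,-)` and `(-,+)` but not of types `(+,+)` and `(-,-)`. -/
noncomputable def altTypeLen {n : ℕ} (σ : Equiv.Perm (Fin n)) (s e : Bool) : ℕ :=
  sSup {k | ∃ l : List (Fin n), IsAltSeq σ s l ∧ l.length = k ∧
    k % 2 = (if s = e then 0 else 1)}

/-- The length `Aₙ(σ)` of the longest alternating subsequence of `σ`. -/
noncomputable def altLen {n : ℕ} (σ : Equiv.Perm (Fin n)) : ℕ :=
  sSup {k | ∃ l : List (Fin n), (IsAltSeq σ true l ∨ IsAltSeq σ false l) ∧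
    l.length = k ∧ 1 ≤ k}

/-- Expectation with respect to the uniform probability measure on `SEP n`. -/
noncomputable def sepExp (n : ℕ) (f : Equiv.Perm (Fin n) → ℝ) : ℝ :=
  (∑ σ ∈ SEP n, f σ) / (SEP n).card

/-- Variance with respect to the uniform probability measure on `SEP n`. -/
noncomputable def sepVar (n : ℕ) (f : Equiv.Perm (Fin n) → ℝ) : ℝ :=
  sepExp n (fun σ => (f σ - sepExp n f) ^ 2)

/-- `B₁^{+,n}(σ)`: the length of the first indecomposable block (0-indexed positions). -/
noncomputable def Bplus {n : ℕ} (σ : Equiv.Perm (Fin n)) : ℕ :=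
  sInf {j | 1 ≤ j ∧ ∀ i : Fin n, (i : ℕ) < j → (σ i : ℕ) < j}

/-- `B₁^{-,n}(σ)`: the length of the first skew indecomposable block (0-indexed positions). -/
noncomputable def Bminus {n : ℕ} (σ : Equiv.Perm (Fin n)) : ℕ :=
  sInf {j | 1 ≤ j ∧ ∀ i : Fin n, (i : ℕ) < j → n - j ≤ (σ i : ℕ)}

/-- Expectation over indecomposable separable permutations of `[n]`, i.e. the conditional
expectation under the uniform measure on `SEP n` given `{B₁^{+,n} = n}`. -/
noncomputable def indecExp (n : ℕ) (f : Equiv.Perm (Fin n) → ℝ) : ℝ :=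
  (∑ σ ∈ (SEP n).filter (fun σ => Bplus σ = n), f σ) /
    ((SEP n).filter (fun σ => Bplus σ = n)).card

/-- The value of `σ` at the position `i`, as a natural number (and `0` out of range). -/
def permVal {n : ℕ} (σ : Equiv.Perm (Fin n)) (i : ℕ) : ℕ :=
  if h : i < n then (σ ⟨i, h⟩ : ℕ) else 0

theorem permVal_of_lt {n : ℕ} (σ : Equiv.Perm (Fin n)) {i : ℕ} (h : i < n) :
    permVal σ i = (σ ⟨i, h⟩ : ℕ) := dif_pos h

theorem permVal_coe {n : ℕ} (σ : Equiv.Perm (Fin n)) (i : Fin n) :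
    permVal σ i = (σ i : ℕ) := permVal_of_lt σ i.2

theorem permVal_lt {n : ℕ} (σ : Equiv.Perm (Fin n)) {i : ℕ} (h : i < n) :
    permVal σ i < n := by
  rw [permVal_of_lt σ h]; exact Fin.isLt _

theorem permVal_ne {n : ℕ} (σ : Equiv.Perm (Fin n)) {i k : ℕ} (hi : i < n) (hk : k < n)
    (hne : i ≠ k) : permVal σ i ≠ permVal σ k := by
  rw [permVal_of_lt σ hi, permVal_of_lt σ hk]
  intro h
  exact hne (by simpa using σ.injective (Fin.ext h))

/-- `f` has a peak at position `i + 1`. -/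
def IsPeakAt (f : ℕ → ℕ) (i : ℕ) : Prop := f i < f (i + 1) ∧ f (i + 2) < f (i + 1)

/-- The number of interior peaks of `σ`. -/
noncomputable def numPeaks {n : ℕ} (σ : Equiv.Perm (Fin n)) : ℕ :=
  ((Finset.range n).filter fun i => i + 2 < n ∧ IsPeakAt (permVal σ) i).card

theorem exists_isPeakAt {f : ℕ → ℕ} {a b c : ℕ} (hab : a < b) (hbc : b < c)
    (hf : ∀ i k, i ≤ c → k ≤ c → i ≠ k → f i ≠ f k) (h1 : f a < f b) (h2 : f c < f b) :
    ∃ q, a ≤ q ∧ q + 2 ≤ c ∧ IsPeakAt f q := by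
  obtain ⟨p, hp, hmax⟩ := (Finset.Icc a c).exists_max_image f ⟨b, by simp; omega⟩
  simp only [Finset.mem_Icc] at hp hmax
  have hb := hmax b (by omega)
  have hpa : p ≠ a := by rintro rfl; omega
  have hpc : p ≠ c := by rintro rfl; omega
  obtain ⟨q, rfl⟩ : ∃ q, p = q + 1 := ⟨p - 1, by omega⟩
  have := hmax q (by omega)
  have := hmax (q + 2) (by omega)
  have := hf q (q + 1) (by omega) (by omega) (by omega)
  have := hf (q + 2) (q + 1) (by omega) (by omega) (by omega)
  exact ⟨q, by omega, by omega, by omega, by omega⟩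

theorem IsAltSeq.le_card_peaks {n : ℕ} {σ : Equiv.Perm (Fin n)} {l : List (Fin n)}
    (hl : IsAltSeq σ true l) (i : ℕ) (hi : 2 * i < l.length) :
    i ≤ ((Finset.range n).filter fun q =>
      q + 1 < (l[2 * i] : ℕ) ∧ q + 2 < n ∧ IsPeakAt (permVal σ) q).card := by
  induction i with
  | zero => simp
  | succ i ih =>
    have hchain := List.isChain_iff_getElem.1 hl.1
    have h1 := hchain (2 * i) (by omega)
    have h2 := hchain (2 * i + 1) (by omega)
    have a1 := hl.2 (2 * i) (by omega)
    have a2 := hl.2 (2 * i + 1) (by omega)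
    rw [if_pos (by simp)] at a1
    rw [if_neg (by simp)] at a2
    simp only [List.get_eq_getElem] at a1 a2
    rw [Fin.lt_def] at h1 h2 a1 a2
    simp only [← permVal_coe] at a1 a2
    obtain ⟨q, hq1, hq2, hq⟩ := exists_isPeakAt h1 h2
      (fun i k hi hk => permVal_ne σ (by omega) (by omega)) a1 a2
    have := ih (by omega)
    have e : l[2 * (i + 1)] = l[2 * i + 1 + 1] := rfl
    have hlt := (l[2 * i + 1 + 1]).2
    refine Nat.succ_le_of_lt (lt_of_le_of_lt this (Finset.card_lt_card ?_))
    rw [Finset.ssubset_iff_of_subset]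
    · refine ⟨q, ?_, ?_⟩
      · simp only [Finset.mem_filter, Finset.mem_range, e]
        exact ⟨by omega, by omega, by omega, hq⟩
      · simp only [Finset.mem_filter, Finset.mem_range]
        omega
    · intro x hx
      simp only [Finset.mem_filter, Finset.mem_range, e] at hx ⊢
      exact ⟨hx.1, by omega, hx.2.2⟩

theorem IsAltSeq.length_le {n : ℕ} {σ : Equiv.Perm (Fin n)} {l : List (Fin n)}
    (hl : IsAltSeq σ true l) (hodd : l.length % 2 = 1) : l.length ≤ 2 * numPeaks σ + 1 := by
  have h := hl.le_card_peaks (l.length / 2) (by omega)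
  have : ((Finset.range n).filter fun q => q + 1 < (l[2 * (l.length / 2)] : ℕ) ∧
      q + 2 < n ∧ IsPeakAt (permVal σ) q).card ≤ numPeaks σ := by
    apply Finset.card_le_card
    intro x hx
    simp only [Finset.mem_filter] at hx ⊢
    tauto
  omega

/-- The first `k` values of `g` are positions along which `f` alternates, starting with an
ascent. -/
def AltFun (f g : ℕ → ℕ) (k : ℕ) : Prop :=
  ∀ j, j + 1 < k → g j < g (j + 1) ∧
    (j % 2 = 0 → f (g j) < f (g (j + 1))) ∧ (j % 2 = 1 → f (g (j + 1)) < f (g j))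

theorem AltFun.append {f g : ℕ → ℕ} {k m : ℕ} (h : AltFun f g (k + 1)) (hm : g k < m)
    (h0 : k % 2 = 0 → f (g k) < f m) (h1 : k % 2 = 1 → f m < f (g k)) :
    AltFun f (Function.update g (k + 1) m) (k + 2) := by
  intro j hj
  rcases Nat.lt_or_ge j k with hjk | hjk
  · simpa [Function.update_of_ne (show j ≠ k + 1 by omega),
      Function.update_of_ne (show j + 1 ≠ k + 1 by omega)] using h j (by omega)
  · obtain rfl : j = k := by omega
    simpa [Function.update_of_ne (show j ≠ j + 1 by omega)] using ⟨hm, h0, h1⟩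

theorem AltFun.replace {f g : ℕ → ℕ} {k m : ℕ} (h : AltFun f g (k + 1)) (hm : g k < m)
    (h0 : k % 2 = 0 → f m < f (g k)) (h1 : k % 2 = 1 → f (g k) < f m) :
    AltFun f (Function.update g k m) (k + 1) := by
  intro j hj
  have hj' := h j hj
  rcases Nat.lt_or_ge (j + 1) k with hjk | hjk
  · simpa [Function.update_of_ne (show j ≠ k by omega),
      Function.update_of_ne (show j + 1 ≠ k by omega)] using hj'
  · obtain rfl : k = j + 1 := by omega
    simp only [Function.update_self, Function.update_of_ne (show j ≠ j + 1 by omega)]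
    omega

theorem exists_altFun (f : ℕ → ℕ) (m : ℕ) (hf : ∀ i, i < m → f i ≠ f (i + 1)) :
    ∃ g k, AltFun f g (k + 1) ∧ g k = m ∧
      k / 2 = ((Finset.range m).filter fun i => i + 2 ≤ m ∧ IsPeakAt f i).card ∧
      (k % 2 = 0 → m = 0 ∨ f m < f (m - 1)) ∧ (k % 2 = 1 → 0 < m ∧ f (m - 1) < f m) := by
  induction m with
  | zero => exact ⟨fun _ => 0, 0, fun j hj => by omega, rfl, by simp, by simp, by simp⟩
  | succ m ih =>
    obtain ⟨g, k, hg, hgm, hk, he, ho⟩ := ih fun i hi => hf i (by omega)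
    have hne := hf m (by omega)
    have hcard : ((Finset.range (m + 1)).filter fun i => i + 2 ≤ m + 1 ∧ IsPeakAt f i).card =
        ((Finset.range m).filter fun i => i + 2 ≤ m ∧ IsPeakAt f i).card +
          if 0 < m ∧ f (m - 1) < f m ∧ f (m + 1) < f m then 1 else 0 := by
      rcases m with _ | m
      · simp
      · rw [Finset.card_filter, Finset.card_filter, Finset.sum_range_succ,
          Finset.sum_range_succ, Finset.sum_range_succ _ m]
        have : ∀ x ∈ Finset.range m, (if x + 2 ≤ m + 1 + 1 ∧ IsPeakAt f x then 1 else 0) =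
            (if x + 2 ≤ m + 1 ∧ IsPeakAt f x then 1 else 0) := by
          intro x hx
          rw [Finset.mem_range] at hx
          simp [show x + 2 ≤ m + 1 + 1 by omega, show x + 2 ≤ m + 1 by omega]
        rw [Finset.sum_congr rfl this]
        simp [IsPeakAt]
    rw [hcard, ← hk]
    rcases Nat.mod_two_eq_zero_or_one k with hk2 | hk2 <;>
      rcases lt_or_gt_of_ne hne with hlt | hlt
    · refine ⟨_, _, hg.append (m := m + 1) (by omega) (by rw [hgm]; omega) (by omega), by simp,
        ?_, by omega, by simp; omega⟩
      rw [if_neg (by omega)]; omega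
    · refine ⟨_, _, hg.replace (m := m + 1) (by omega) (by rw [hgm]; omega) (by omega), by simp,
        ?_, by simp; omega, by omega⟩
      rw [if_neg (by have := he hk2; omega)]; omega
    · refine ⟨_, _, hg.replace (m := m + 1) (by omega) (by omega) (by rw [hgm]; omega), by simp,
        ?_, by omega, by simp; omega⟩
      rw [if_neg (by omega)]; omega
    · refine ⟨_, _, hg.append (m := m + 1) (by omega) (by omega) (by rw [hgm]; omega), by simp,
        ?_, by simp; omega, by omega⟩
      rw [if_pos (by have := ho hk2; omega)]; omega

theorem AltFun.le_last {f g : ℕ → ℕ} {k : ℕ} (h : AltFun f g (k + 1)) :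
    ∀ d j, j + d = k → g j ≤ g k
  | 0, j, hj => by rw [← hj]; rfl
  | d + 1, j, hj => (h j (by omega)).1.le.trans (h.le_last d (j + 1) (by omega))

theorem exists_isAltSeq {n : ℕ} (hn : 0 < n) (σ : Equiv.Perm (Fin n)) :
    ∃ l, IsAltSeq σ true l ∧ l.length = 2 * numPeaks σ + 1 := by
  obtain ⟨g, k, hg, hgk, hk, -, -⟩ := exists_altFun (permVal σ) (n - 1)
    fun i hi => permVal_ne σ (by omega) (by omega) (by omega)
  have hpk : k / 2 = numPeaks σ := by
    rw [hk, numPeaks]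
    congr 1
    ext x
    simp only [Finset.mem_filter, Finset.mem_range]
    constructor
    · rintro ⟨h1, h2, h3⟩; exact ⟨by omega, by omega, h3⟩
    · rintro ⟨h1, h2, h3⟩; exact ⟨by omega, by omega, h3⟩
  have hlt : ∀ j ≤ k, g j < n := fun j hj => by
    have := hg.le_last (k - j) j (by omega)
    omega
  refine ⟨List.ofFn fun j : Fin (2 * numPeaks σ + 1) => ⟨g j, hlt j (by omega)⟩,
    ⟨?_, ?_⟩, by simp⟩
  · apply List.isChain_iff_getElem.2
    intro i hi
    simp only [List.length_ofFn] at hi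
    simp only [List.getElem_ofFn, Fin.mk_lt_mk]
    exact (hg i (by omega)).1
  · intro j hj
    simp only [List.length_ofFn] at hj
    have := hg j (by omega)
    rw [permVal_of_lt σ (hlt j (by omega)), permVal_of_lt σ (hlt (j + 1) (by omega))] at this
    simp only [decide_eq_true_eq, List.get_eq_getElem, List.getElem_ofFn, Fin.lt_def]
    split_ifs with h
    · exact this.2.1 h
    · exact this.2.2 (by omega)

theorem altTypeLen_true_false {n : ℕ} (hn : 0 < n) (σ : Equiv.Perm (Fin n)) :
    altTypeLen σ true false = 2 * numPeaks σ + 1 := by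
  apply IsGreatest.csSup_eq
  constructor
  · obtain ⟨l, hl, hlen⟩ := exists_isAltSeq hn σ
    exact ⟨l, hl, hlen, by simp⟩
  · rintro k ⟨l, hl, rfl, hk⟩
    exact hl.length_le (by simpa using hk)

/-- `f` has no occurrence of the patterns 2413 and 3142 at positions below `N`. -/
def SeparableFun (f : ℕ → ℕ) (N : ℕ) : Prop :=
  ∀ a b c d, a < b → b < c → c < d → d < N →
    ¬ (f c < f a ∧ f a < f d ∧ f d < f b) ∧ ¬ (f b < f d ∧ f d < f a ∧ f a < f c)

theorem separable_iff {n : ℕ} (σ : Equiv.Perm (Fin n)) :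
    Separable σ ↔ SeparableFun (permVal σ) n := by
  constructor
  · rintro ⟨h1, h2⟩ a b c d hab hbc hcd hd
    have hmono : StrictMono (![⟨a, by omega⟩, ⟨b, by omega⟩, ⟨c, by omega⟩, ⟨d, hd⟩] :
        Fin 4 → Fin n) := by
      rw [Fin.strictMono_iff_lt_succ]
      intro i
      fin_cases i <;> simpa
    rw [permVal_of_lt σ (show a < n by omega), permVal_of_lt σ (show b < n by omega),
      permVal_of_lt σ (show c < n by omega), permVal_of_lt σ hd]
    constructor
    · rintro ⟨h3, h4, h5⟩
      refine h1 ⟨_, hmono, fun x y => ?_⟩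
      fin_cases x <;> fin_cases y <;> simp <;> simp only [Fin.lt_def, Fin.le_def] <;> omega
    · rintro ⟨h3, h4, h5⟩
      refine h2 ⟨_, hmono, fun x y => ?_⟩
      fin_cases x <;> fin_cases y <;> simp <;> simp only [Fin.lt_def, Fin.le_def] <;> omega
  · intro h
    constructor
    · rintro ⟨g, hg, hσ⟩
      have := h (g 0) (g 1) (g 2) (g 3) (hg (by decide)) (hg (by decide)) (hg (by decide))
        (g 3).2
      simp only [permVal_coe, ← Fin.lt_def] at this
      exact this.1 ⟨(hσ 2 0).1 (by decide), (hσ 0 3).1 (by decide), (hσ 3 1).1 (by decide)⟩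
    · rintro ⟨g, hg, hσ⟩
      have := h (g 0) (g 1) (g 2) (g 3) (hg (by decide)) (hg (by decide)) (hg (by decide))
        (g 3).2
      simp only [permVal_coe, ← Fin.lt_def] at this
      exact this.2 ⟨(hσ 1 3).1 (by decide), (hσ 3 0).1 (by decide), (hσ 0 2).1 (by decide)⟩

/-- The first `m` values of `f` form a nontrivial direct sum. -/
def UpSplit {α : Type*} [LT α] (f : ℕ → α) (m : ℕ) : Prop :=
  ∃ c, 0 < c ∧ c < m ∧ ∀ i k, i < c → c ≤ k → k < m → f i < f k

/-- The first `m` values of `f` form a nontrivial skew sum. -/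
def DownSplit {α : Type*} [LT α] (f : ℕ → α) (m : ℕ) : Prop :=
  ∃ c, 0 < c ∧ c < m ∧ ∀ i k, i < c → c ≤ k → k < m → f k < f i

theorem UpSplit.succ {α : Type*} [LinearOrder α] {f : ℕ → α} {m : ℕ}
    (hne : ∀ i < m, f i ≠ f m)
    (havoid : ∀ a b c, a < b → b < c → c < m → ¬ (f b < f m ∧ f m < f a ∧ f a < f c))
    (ih : ∀ c, 2 ≤ c → c < m → UpSplit f c ∨ DownSplit f c) (hup : UpSplit f m) :
    UpSplit f (m + 1) ∨ DownSplit f (m + 1) := by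
  set c := Nat.find hup with hc
  obtain ⟨hc0, hcm, hsplit⟩ := Nat.find_spec hup
  have hmin := fun e he => Nat.find_min hup (m := e) he
  rw [← hc] at hc0 hcm hsplit hmin
  by_cases h0 : ∀ i < c, f i < f m
  · refine Or.inl ⟨c, hc0, by omega, fun i k hi hk hkm => ?_⟩
    rcases Nat.lt_or_ge k m with h | h
    · exact hsplit i k hi hk h
    · obtain rfl : k = m := by omega
      exact h0 i hi
  by_cases h1 : ∀ i < m, f m < f i
  · refine Or.inr ⟨m, by omega, by omega, fun i k hi hk hkm => ?_⟩
    obtain rfl : k = m := by omega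
    exact h1 i hi
  exfalso
  push Not at h0 h1
  obtain ⟨i0, hi0, h0⟩ := h0
  obtain ⟨i1, hi1, h1⟩ := h1
  replace h0 := lt_of_le_of_ne h0 (hne i0 (by omega)).symm
  replace h1 := lt_of_le_of_ne h1 (hne i1 (by omega))
  have hi1c : i1 < c := by
    by_contra h
    exact lt_asymm (h0.trans (hsplit i0 i1 hi0 (by omega) hi1)) h1
  have hne01 : i0 ≠ i1 := by
    rintro rfl
    exact lt_asymm h0 h1
  rcases ih c (by omega) hcm with ⟨e, he0, hec, he⟩ | ⟨e, he0, hec, he⟩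
  · refine hmin e hec ⟨he0, by omega, fun i k hi hk hkm => ?_⟩
    rcases Nat.lt_or_ge k c with h | h
    · exact he i k hi hk h
    · exact hsplit i k (by omega) h hkm
  · obtain ⟨g, hg, hgm⟩ : ∃ g < e, f m < f g := by
      by_cases h : i0 < e
      · exact ⟨i0, h, h0⟩
      · exact ⟨0, he0, h0.trans (he 0 i0 he0 (by omega) hi0)⟩
    obtain ⟨d, hde, hdc, hdm⟩ : ∃ d, e ≤ d ∧ d < c ∧ f d < f m := by
      by_cases h : i1 < e
      · exact ⟨e, le_rfl, hec, (he i1 e h le_rfl hec).trans h1⟩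
      · exact ⟨i1, by omega, hi1c, h1⟩
    exact havoid g d c (by omega) hdc hcm ⟨hdm, hgm, hsplit g c (by omega) le_rfl hcm⟩

theorem DownSplit.succ {α : Type*} [LinearOrder α] {f : ℕ → α} {m : ℕ}
    (hne : ∀ i < m, f i ≠ f m)
    (havoid : ∀ a b c, a < b → b < c → c < m → ¬ (f c < f a ∧ f a < f m ∧ f m < f b))
    (ih : ∀ c, 2 ≤ c → c < m → UpSplit f c ∨ DownSplit f c) (hdown : DownSplit f m) :
    UpSplit f (m + 1) ∨ DownSplit f (m + 1) :=
  (UpSplit.succ (α := αᵒᵈ) (f := f) (m := m) hne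
    (fun a b c hab hbc hcm h => havoid a b c hab hbc hcm ⟨h.2.2, h.2.1, h.1⟩)
    (fun c h2 hc => (ih c h2 hc).symm) hdown).symm

theorem SeparableFun.upSplit_or_downSplit {f : ℕ → ℕ} {N : ℕ} (hf : SeparableFun f N)
    (hinj : ∀ i k, i < N → k < N → i ≠ k → f i ≠ f k) (m : ℕ) (h2 : 2 ≤ m) (hm : m ≤ N) :
    UpSplit f m ∨ DownSplit f m := by
  induction m using Nat.strong_induction_on with
  | _ m ih =>
    obtain ⟨m, rfl⟩ : ∃ k, m = k + 1 := ⟨m - 1, by omega⟩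
    have hne : ∀ i < m, f i ≠ f m := fun i hi => hinj i m (by omega) (by omega) (by omega)
    have ih' : ∀ c, 2 ≤ c → c < m → UpSplit f c ∨ DownSplit f c :=
      fun c h2 hc => ih c (by omega) h2 (by omega)
    rcases Nat.lt_or_ge m 2 with hm2 | hm2
    · obtain rfl : m = 1 := by omega
      rcases lt_or_gt_of_ne (hne 0 one_pos) with h | h
      · refine Or.inl ⟨1, one_pos, by omega, fun i k hi hk hkm => ?_⟩
        obtain rfl : i = 0 := by omega
        obtain rfl : k = 1 := by omega
        exact h
      · refine Or.inr ⟨1, one_pos, by omega, fun i k hi hk hkm => ?_⟩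
        obtain rfl : i = 0 := by omega
        obtain rfl : k = 1 := by omega
        exact h
    · rcases ih m (by omega) hm2 (by omega) with h | h
      · exact h.succ hne (fun a b c hab hbc hc => (hf a b c m hab hbc hc hm).2) ih'
      · exact h.succ hne (fun a b c hab hbc hc => (hf a b c m hab hbc hc hm).1) ih'

theorem UpSplit.not_downSplit {f : ℕ → ℕ} {m : ℕ} (h : UpSplit f m) : ¬ DownSplit f m := by
  obtain ⟨c, hc0, hcm, hc⟩ := h
  rintro ⟨d, hd0, hdm, hd⟩
  exact lt_asymm (hc 0 (m - 1) hc0 (by omega) (by omega))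
    (hd 0 (m - 1) hd0 (by omega) (by omega))

/-- The reverse of a permutation. -/
def permReverse {n : ℕ} (σ : Equiv.Perm (Fin n)) : Equiv.Perm (Fin n) := Fin.revPerm.trans σ

/-- The complement of a permutation. -/
def permCompl {n : ℕ} (σ : Equiv.Perm (Fin n)) : Equiv.Perm (Fin n) := σ.trans Fin.revPerm

theorem permReverse_permReverse {n : ℕ} (σ : Equiv.Perm (Fin n)) :
    permReverse (permReverse σ) = σ := by
  ext i; simp [permReverse]

theorem permCompl_permCompl {n : ℕ} (σ : Equiv.Perm (Fin n)) :
    permCompl (permCompl σ) = σ := by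
  ext i; simp [permCompl]

theorem permVal_permReverse {n : ℕ} (σ : Equiv.Perm (Fin n)) {i : ℕ} (hi : i < n) :
    permVal (permReverse σ) i = permVal σ (n - 1 - i) := by
  rw [permVal_of_lt _ hi, permVal_of_lt _ (show n - 1 - i < n by omega)]
  simp only [permReverse, Equiv.trans_apply, Fin.revPerm_apply]
  congr 2
  ext
  simp [Fin.val_rev]
  omega

theorem permVal_permCompl {n : ℕ} (σ : Equiv.Perm (Fin n)) {i : ℕ} (hi : i < n) :
    permVal (permCompl σ) i = n - 1 - permVal σ i := by
  rw [permVal_of_lt _ hi, permVal_of_lt _ hi]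
  simp only [permCompl, Equiv.trans_apply, Fin.revPerm_apply, Fin.val_rev]
  omega

theorem Separable.permReverse {n : ℕ} {σ : Equiv.Perm (Fin n)} (h : Separable σ) :
    Separable (permReverse σ) := by
  rw [separable_iff] at h ⊢
  intro a b c d hab hbc hcd hd
  have := h (n - 1 - d) (n - 1 - c) (n - 1 - b) (n - 1 - a) (by omega) (by omega) (by omega)
    (by omega)
  rw [permVal_permReverse σ (show a < n by omega), permVal_permReverse σ (show b < n by omega),
    permVal_permReverse σ (show c < n by omega), permVal_permReverse σ hd]
  omega

theorem Separable.permCompl {n : ℕ} {σ : Equiv.Perm (Fin n)} (h : Separable σ) :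
    Separable (permCompl σ) := by
  rw [separable_iff] at h ⊢
  intro a b c d hab hbc hcd hd
  have := h a b c d hab hbc hcd hd
  have := permVal_lt σ (show a < n by omega)
  have := permVal_lt σ (show b < n by omega)
  have := permVal_lt σ (show c < n by omega)
  have := permVal_lt σ hd
  rw [permVal_permCompl σ (show a < n by omega), permVal_permCompl σ (show b < n by omega),
    permVal_permCompl σ (show c < n by omega), permVal_permCompl σ hd]
  omega

theorem mem_SEP {n : ℕ} {σ : Equiv.Perm (Fin n)} : σ ∈ SEP n ↔ Separable σ := by
  simp [SEP]

theorem upSplit_permReverse {n : ℕ} {σ : Equiv.Perm (Fin n)} :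
    UpSplit (permVal (permReverse σ)) n ↔ DownSplit (permVal σ) n := by
  constructor
  · rintro ⟨c, hc0, hcn, hc⟩
    refine ⟨n - c, by omega, by omega, fun i k hi hk hkn => ?_⟩
    have := hc (n - 1 - k) (n - 1 - i) (by omega) (by omega) (by omega)
    rw [permVal_permReverse σ (by omega), permVal_permReverse σ (by omega)] at this
    rwa [show n - 1 - (n - 1 - k) = k by omega, show n - 1 - (n - 1 - i) = i by omega] at this
  · rintro ⟨c, hc0, hcn, hc⟩
    refine ⟨n - c, by omega, by omega, fun i k hi hk hkn => ?_⟩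
    rw [permVal_permReverse σ (by omega), permVal_permReverse σ hkn]
    exact hc _ _ (by omega) (by omega) (by omega)

theorem numPeaks_permReverse_le {n : ℕ} (σ : Equiv.Perm (Fin n)) :
    numPeaks σ ≤ numPeaks (permReverse σ) := by
  rw [numPeaks, numPeaks]
  apply Finset.card_le_card_of_injOn (fun i => n - 3 - i)
  · intro i hi
    simp only [Finset.mem_coe, Finset.mem_filter, Finset.mem_range] at hi ⊢
    unfold IsPeakAt at hi ⊢
    refine ⟨by omega, by omega, ?_⟩
    rw [permVal_permReverse σ (by omega), permVal_permReverse σ (by omega),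
      permVal_permReverse σ (by omega), show n - 1 - (n - 3 - i) = i + 2 by omega,
      show n - 1 - (n - 3 - i + 1) = i + 1 by omega,
      show n - 1 - (n - 3 - i + 2) = i by omega]
    exact hi.2.2.symm
  · intro i hi k hk h
    simp only [Finset.mem_coe, Finset.mem_filter, Finset.mem_range] at hi hk h
    omega

theorem numPeaks_permReverse {n : ℕ} (σ : Equiv.Perm (Fin n)) :
    numPeaks (permReverse σ) = numPeaks σ :=
  le_antisymm (by simpa [permReverse_permReverse] using numPeaks_permReverse_le (permReverse σ))
    (numPeaks_permReverse_le σ)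

theorem Bplus_spec {n : ℕ} (hn : 0 < n) (σ : Equiv.Perm (Fin n)) :
    (1 ≤ Bplus σ ∧ ∀ i : Fin n, (i : ℕ) < Bplus σ → (σ i : ℕ) < Bplus σ) ∧
    ∀ j, 1 ≤ j → (∀ i : Fin n, (i : ℕ) < j → (σ i : ℕ) < j) → Bplus σ ≤ j :=
  ⟨Nat.sInf_mem (s := {j | 1 ≤ j ∧ ∀ i : Fin n, (i : ℕ) < j → (σ i : ℕ) < j})
    ⟨n, hn, fun i _ => (σ i).2⟩, fun _ h1 h2 => Nat.sInf_le ⟨h1, h2⟩⟩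

theorem Bplus_le {n : ℕ} (hn : 0 < n) (σ : Equiv.Perm (Fin n)) : Bplus σ ≤ n :=
  (Bplus_spec hn σ).2 n hn fun i _ => (σ i).2

theorem mapsTo_iff_lt {n : ℕ} (σ : Equiv.Perm (Fin n)) {c : ℕ} (hc : c < n) :
    (∀ i : Fin n, (i : ℕ) < c → (σ i : ℕ) < c) ↔
      ∀ i k : Fin n, (i : ℕ) < c → c ≤ k → (σ i : ℕ) < σ k := by
  constructor
  · intro h i k hi hk
    refine (h i hi).trans_le ?_
    by_contra! hlt
    have himage : (Finset.univ.filter fun i : Fin n => (i : ℕ) < c).image σ =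
        Finset.univ.filter fun i : Fin n => (i : ℕ) < c := by
      apply Finset.eq_of_subset_of_card_le
      · intro x hx
        simp only [Finset.mem_image, Finset.mem_filter, Finset.mem_univ, true_and] at hx ⊢
        obtain ⟨y, hy, rfl⟩ := hx
        exact h y hy
      · rw [Finset.card_image_of_injective _ σ.injective]
    have hk' : σ k ∈ Finset.univ.filter fun i : Fin n => (i : ℕ) < c := by simpa using hlt
    rw [← himage, Finset.mem_image] at hk'
    obtain ⟨y, hy, hyk⟩ := hk'
    obtain rfl := σ.injective hyk
    simp only [Finset.mem_filter, Finset.mem_univ, true_and] at hy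
    omega
  · intro h i hi
    by_contra! hlt
    have : (Finset.univ.filter fun k : Fin n => c ≤ (k : ℕ)).card ≤
        (Finset.univ.filter fun k : Fin n => c < (k : ℕ)).card := by
      apply Finset.card_le_card_of_injOn σ _ σ.injective.injOn
      intro k hk
      simp only [Finset.mem_coe, Finset.mem_filter, Finset.mem_univ, true_and] at hk ⊢
      exact hlt.trans_lt (h i k hi hk)
    refine absurd this (not_le.2 (Finset.card_lt_card ?_))
    rw [Finset.ssubset_iff_of_subset]
    · exact ⟨⟨c, hc⟩, by simp, by simp⟩
    · intro x
      simp only [Finset.mem_filter, Finset.mem_univ, true_and]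
      exact le_of_lt

theorem Bplus_lt_iff_upSplit {n : ℕ} (hn : 0 < n) (σ : Equiv.Perm (Fin n)) :
    Bplus σ < n ↔ UpSplit (permVal σ) n := by
  have hiff : ∀ c, c < n → ((∀ i : Fin n, (i : ℕ) < c → (σ i : ℕ) < c) ↔
      ∀ i k, i < c → c ≤ k → k < n → permVal σ i < permVal σ k) := by
    intro c hc
    rw [mapsTo_iff_lt σ hc]
    constructor
    · intro h i k hi hk hkn
      rw [permVal_of_lt σ (show i < n by omega), permVal_of_lt σ hkn]
      exact h _ _ hi hk
    · intro h i k hi hk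
      rw [← permVal_coe, ← permVal_coe]
      exact h i k hi hk k.2
  obtain ⟨⟨h1, h2⟩, h3⟩ := Bplus_spec hn σ
  constructor
  · intro h
    exact ⟨Bplus σ, h1, h, (hiff _ h).1 h2⟩
  · rintro ⟨c, hc0, hcn, hc⟩
    exact (h3 c hc0 ((hiff c hcn).2 hc)).trans_lt hcn

/-- The direct sum of two permutations. -/
def permSum {j m : ℕ} (α : Equiv.Perm (Fin j)) (β : Equiv.Perm (Fin m)) :
    Equiv.Perm (Fin (j + m)) :=
  finSumFinEquiv.permCongr (Equiv.Perm.sumCongrHom (Fin j) (Fin m) (α, β))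

theorem permSum_castAdd {j m : ℕ} (α : Equiv.Perm (Fin j)) (β : Equiv.Perm (Fin m)) (i : Fin j) :
    permSum α β (Fin.castAdd m i) = Fin.castAdd m (α i) := by
  simp [permSum, Equiv.permCongr_apply]

theorem permSum_natAdd {j m : ℕ} (α : Equiv.Perm (Fin j)) (β : Equiv.Perm (Fin m)) (i : Fin m) :
    permSum α β (Fin.natAdd j i) = Fin.natAdd j (β i) := by
  simp [permSum, Equiv.permCongr_apply]

theorem permVal_permSum_of_lt {j m : ℕ} (α : Equiv.Perm (Fin j)) (β : Equiv.Perm (Fin m))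
    {i : ℕ} (h : i < j) : permVal (permSum α β) i = permVal α i := by
  have := congrArg Fin.val (permSum_castAdd α β ⟨i, h⟩)
  rw [permVal_of_lt _ (show i < j + m by omega), permVal_of_lt _ h]
  exact this

theorem permVal_permSum_add {j m : ℕ} (α : Equiv.Perm (Fin j)) (β : Equiv.Perm (Fin m))
    {i : ℕ} (h : i < m) : permVal (permSum α β) (j + i) = j + permVal β i := by
  have := congrArg Fin.val (permSum_natAdd α β ⟨i, h⟩)
  rw [permVal_of_lt _ (show j + i < j + m by omega), permVal_of_lt _ h]
  exact this

theorem permSum_injective {j m : ℕ} :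
    Function.Injective fun p : Equiv.Perm (Fin j) × Equiv.Perm (Fin m) => permSum p.1 p.2 :=
  (Equiv.injective _).comp Equiv.Perm.sumCongrHom_injective

theorem exists_permSum {j m : ℕ} (σ : Equiv.Perm (Fin (j + m)))
    (h : ∀ i : Fin (j + m), (i : ℕ) < j → (σ i : ℕ) < j) :
    ∃ (α : Equiv.Perm (Fin j)) (β : Equiv.Perm (Fin m)), permSum α β = σ := by
  obtain ⟨⟨α, β⟩, hαβ⟩ := Equiv.Perm.mem_sumCongrHom_range_of_perm_mapsTo_inl
    (σ := finSumFinEquiv.permCongr.symm σ) (by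
      rintro _ ⟨a, rfl⟩
      have ha := h (Fin.castAdd m a) a.2
      refine ⟨⟨_, ha⟩, ?_⟩
      apply finSumFinEquiv.injective
      simp only [Equiv.permCongr_symm_apply, Equiv.apply_symm_apply,
        finSumFinEquiv_apply_left]
      rfl)
  exact ⟨α, β, by rw [permSum, hαβ, Equiv.apply_symm_apply]⟩

theorem separable_permSum {j m : ℕ} {α : Equiv.Perm (Fin j)} {β : Equiv.Perm (Fin m)} :
    Separable (permSum α β) ↔ Separable α ∧ Separable β := by
  simp only [separable_iff]
  constructor
  · intro h
    constructor
    · intro a b c d hab hbc hcd hd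
      have := h a b c d hab hbc hcd (by omega)
      rwa [permVal_permSum_of_lt α β (by omega), permVal_permSum_of_lt α β (by omega),
        permVal_permSum_of_lt α β (by omega), permVal_permSum_of_lt α β (by omega)] at this
    · intro a b c d hab hbc hcd hd
      have := h (j + a) (j + b) (j + c) (j + d) (by omega) (by omega) (by omega) (by omega)
      rw [permVal_permSum_add α β (by omega), permVal_permSum_add α β (by omega),
        permVal_permSum_add α β (by omega), permVal_permSum_add α β (by omega)] at this
      omega
  · rintro ⟨hα, hβ⟩ a b c d hab hbc hcd hd
    have key : ∀ i < j + m, (i < j ∧ permVal (permSum α β) i < j) ∨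
        (j ≤ i ∧ j ≤ permVal (permSum α β) i) := by
      intro i hi
      rcases Nat.lt_or_ge i j with h | h
      · exact Or.inl ⟨h, by rw [permVal_permSum_of_lt α β h]; exact permVal_lt α h⟩
      · obtain ⟨i, rfl⟩ := Nat.exists_eq_add_of_le h
        exact Or.inr ⟨h, by rw [permVal_permSum_add α β (by omega)]; omega⟩
    have ka := key a (by omega)
    have kb := key b (by omega)
    have kc := key c (by omega)
    have kd := key d (by omega)
    by_cases hdj : d < j
    · rw [permVal_permSum_of_lt α β (by omega), permVal_permSum_of_lt α β (by omega),
        permVal_permSum_of_lt α β (by omega), permVal_permSum_of_lt α β (by omega)]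
      exact hα a b c d hab hbc hcd hdj
    by_cases haj : a < j
    · omega
    obtain ⟨a, rfl⟩ := Nat.exists_eq_add_of_le (not_lt.1 haj)
    obtain ⟨b, rfl⟩ := Nat.exists_eq_add_of_le (show j ≤ b by omega)
    obtain ⟨c, rfl⟩ := Nat.exists_eq_add_of_le (show j ≤ c by omega)
    obtain ⟨d, rfl⟩ := Nat.exists_eq_add_of_le (show j ≤ d by omega)
    have := hβ a b c d (by omega) (by omega) (by omega) (by omega)
    rw [permVal_permSum_add α β (by omega), permVal_permSum_add α β (by omega),
      permVal_permSum_add α β (by omega), permVal_permSum_add α β (by omega)]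
    omega

theorem Bplus_permSum {j m : ℕ} (hj : 0 < j) (α : Equiv.Perm (Fin j))
    (β : Equiv.Perm (Fin m)) : Bplus (permSum α β) = Bplus α := by
  have hiff : ∀ c ≤ j, (∀ i : Fin (j + m), (i : ℕ) < c → (permSum α β i : ℕ) < c) ↔
      ∀ i : Fin j, (i : ℕ) < c → (α i : ℕ) < c := by
    intro c hc
    constructor
    · intro h i hi
      have := h (Fin.castAdd m i) hi
      rwa [permSum_castAdd] at this
    · intro h i hi
      have := h ⟨i, by omega⟩ hi
      rw [← permVal_coe, permVal_permSum_of_lt α β (by omega), permVal_of_lt α (by omega)]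
      exact this
  obtain ⟨⟨h1, h2⟩, h3⟩ := Bplus_spec (n := j + m) (by omega) (permSum α β)
  obtain ⟨⟨h1', h2'⟩, h3'⟩ := Bplus_spec hj α
  have hle := Bplus_le hj α
  have hle' := h3 _ h1' ((hiff _ hle).2 h2')
  exact le_antisymm hle' (h3' _ h1 ((hiff _ (by omega)).1 h2))

/-- The indecomposable separable permutations of `[n]`. -/
noncomputable def indecSEP (n : ℕ) : Finset (Equiv.Perm (Fin n)) :=
  (SEP n).filter fun σ => Bplus σ = n

theorem mem_indecSEP {n : ℕ} {σ : Equiv.Perm (Fin n)} :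
    σ ∈ indecSEP n ↔ Separable σ ∧ Bplus σ = n := by
  simp [indecSEP, mem_SEP]

theorem indecSEP_zero : indecSEP 0 = ∅ := by
  ext σ
  have h : Bplus σ ∈ {j | 1 ≤ j ∧ ∀ i : Fin 0, (i : ℕ) < j → (σ i : ℕ) < j} :=
    Nat.sInf_mem ⟨1, le_rfl, fun i => i.elim0⟩
  have := h.1
  simp only [mem_indecSEP, Finset.notMem_empty, iff_false]
  omega

theorem sum_filter_Bplus {j m : ℕ} (hj : 0 < j) (g : Equiv.Perm (Fin (j + m)) → ℝ) :
    ∑ σ ∈ (SEP (j + m)).filter (fun σ => Bplus σ = j), g σ =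
      ∑ α ∈ indecSEP j, ∑ β ∈ SEP m, g (permSum α β) := by
  rw [← Finset.sum_product']
  symm
  apply Finset.sum_bij (fun p _ => permSum p.1 p.2)
  · rintro ⟨α, β⟩ h
    simp only [Finset.mem_product, mem_indecSEP, mem_SEP] at h
    simp only [Finset.mem_filter, mem_SEP, separable_permSum, Bplus_permSum hj]
    tauto
  · intro p _ q _ h
    exact permSum_injective h
  · intro σ hσ
    simp only [Finset.mem_filter, mem_SEP] at hσ
    obtain ⟨α, β, rfl⟩ := exists_permSum σ (by
      have := (Bplus_spec (by omega) σ).1.2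
      rwa [hσ.2] at this)
    rw [separable_permSum, Bplus_permSum hj] at hσ
    exact ⟨(α, β), by simp only [Finset.mem_product, mem_indecSEP, mem_SEP]; tauto, rfl⟩
  · intros; rfl

theorem sum_SEP_eq_sum_antidiagonal {n : ℕ} (hn : 0 < n)
    (g : ∀ n, Equiv.Perm (Fin n) → ℝ) :
    ∑ σ ∈ SEP n, g n σ = ∑ p ∈ Finset.HasAntidiagonal.antidiagonal n,
      ∑ α ∈ indecSEP p.1, ∑ β ∈ SEP p.2, g (p.1 + p.2) (permSum α β) := by
  rw [← Finset.sum_fiberwise_of_maps_to (s := SEP n)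
    (t := Finset.range (n + 1)) (g := Bplus)
    (fun σ _ => by rw [Finset.mem_range]; have := Bplus_le hn σ; omega),
    Finset.Nat.sum_antidiagonal_eq_sum_range_succ_mk]
  apply Finset.sum_congr rfl
  intro j hj
  rw [Finset.mem_range] at hj
  obtain ⟨m, rfl⟩ := Nat.exists_eq_add_of_le (show j ≤ n by omega)
  rcases Nat.eq_zero_or_pos j with rfl | hj0
  · simp only [indecSEP_zero, Finset.sum_empty]
    apply Finset.sum_eq_zero
    intro σ hσ
    simp only [Finset.mem_filter] at hσ
    have := (Bplus_spec hn σ).1.1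
    omega
  · rw [sum_filter_Bplus hj0]
    have e : j + m - j = m := Nat.add_sub_cancel_left j m
    simp only
    generalize j + m - j = m' at e ⊢
    subst e
    rfl

/-- The indicator of the event that `σ` begins with a descent. -/
noncomputable def beginDescent {n : ℕ} (σ : Equiv.Perm (Fin n)) : ℕ :=
  if 1 < n ∧ permVal σ 1 < permVal σ 0 then 1 else 0

theorem numPeaks_permSum {j m : ℕ} (hj : 0 < j) (α : Equiv.Perm (Fin j))
    (β : Equiv.Perm (Fin m)) :
    numPeaks (permSum α β) = numPeaks α + numPeaks β + beginDescent β := by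
  obtain ⟨j, rfl⟩ : ∃ k, j = k + 1 := ⟨j - 1, by omega⟩
  simp only [numPeaks, Finset.card_filter]
  rw [Finset.sum_range_add]
  have h2 : ∀ i ∈ Finset.range m, (if j + 1 + i + 2 < j + 1 + m ∧
      IsPeakAt (permVal (permSum α β)) (j + 1 + i) then 1 else 0) =
      if i + 2 < m ∧ IsPeakAt (permVal β) i then 1 else 0 := by
    intro i _
    by_cases hi : i + 2 < m
    · have e0 := permVal_permSum_add α β (show i < m by omega)
      have e1 := permVal_permSum_add α β (show i + 1 < m by omega)
      have e2 := permVal_permSum_add α β hi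
      simp only [← add_assoc] at e1 e2
      refine if_congr ?_ rfl rfl
      simp only [IsPeakAt, e0, e1, e2]
      omega
    · rw [if_neg (by omega), if_neg (by omega)]
  have h1 : ∀ i ∈ Finset.range j, (if i + 2 < j + 1 + m ∧
      IsPeakAt (permVal (permSum α β)) i then 1 else 0) =
      if i + 2 < j + 1 ∧ IsPeakAt (permVal α) i then 1 else 0 := by
    intro i hi
    rw [Finset.mem_range] at hi
    have e0 := permVal_permSum_of_lt α β (show i < j + 1 by omega)
    have e1 := permVal_permSum_of_lt α β (show i + 1 < j + 1 by omega)
    by_cases hi2 : i + 2 < j + 1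
    · have e2 := permVal_permSum_of_lt α β hi2
      refine if_congr ?_ rfl rfl
      simp only [IsPeakAt, e0, e1, e2]
      omega
    · rw [if_neg, if_neg (by omega)]
      rintro ⟨h3, h4, h5⟩
      have e2 := permVal_permSum_add α β (show 0 < m by omega)
      have := permVal_lt α (show i + 1 < j + 1 by omega)
      obtain rfl : j = i + 1 := by omega
      change permVal (permSum α β) (i + 2) = _ at e2
      omega
  have h3 : (if j + 2 < j + 1 + m ∧ IsPeakAt (permVal (permSum α β)) j then 1 else 0) =
      beginDescent β := by
    rw [beginDescent]
    by_cases hm : 1 < m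
    · have e0 := permVal_permSum_of_lt α β (show j < j + 1 by omega)
      have e1 := permVal_permSum_add α β (show 0 < m by omega)
      have e2 := permVal_permSum_add α β hm
      have := permVal_lt α (show j < j + 1 by omega)
      rw [add_zero] at e1
      change permVal (permSum α β) (j + 2) = _ at e2
      refine if_congr ?_ rfl rfl
      simp only [IsPeakAt, e0, e1, e2]
      omega
    · rw [if_neg (by omega), if_neg (by omega)]
  rw [Finset.sum_congr rfl h2, Finset.sum_range_succ, Finset.sum_congr rfl h1, h3,
    Finset.sum_range_succ, if_neg (by omega)]
  omega

theorem sum_SEP_permReverse {n : ℕ} (p : Equiv.Perm (Fin n) → Prop)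
    (g : Equiv.Perm (Fin n) → ℝ) :
    ∑ σ ∈ (SEP n).filter (fun σ => p (permReverse σ)), g (permReverse σ) =
      ∑ σ ∈ (SEP n).filter p, g σ := by
  apply Finset.sum_bij' (fun σ _ => permReverse σ) (fun σ _ => permReverse σ)
  · intro σ hσ
    simp only [Finset.mem_filter, mem_SEP] at hσ ⊢
    exact ⟨hσ.1.permReverse, hσ.2⟩
  · intro σ hσ
    simp only [Finset.mem_filter, mem_SEP, permReverse_permReverse] at hσ ⊢
    exact ⟨hσ.1.permReverse, hσ.2⟩
  · intros; exact permReverse_permReverse _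
  · intros; exact permReverse_permReverse _
  · intros; rfl

theorem two_mul_sum_indecSEP {n : ℕ} (hn : 2 ≤ n) (g : Equiv.Perm (Fin n) → ℝ)
    (hg : ∀ σ, g (permReverse σ) = g σ) :
    2 * ∑ σ ∈ indecSEP n, g σ = ∑ σ ∈ SEP n, g σ := by
  have hup : indecSEP n = (SEP n).filter fun σ => ¬ UpSplit (permVal σ) n := by
    apply Finset.filter_congr
    intro σ _
    rw [← Bplus_lt_iff_upSplit (by omega)]
    have := Bplus_le (show 0 < n by omega) σ
    omega
  have hdown : indecSEP n = (SEP n).filter fun σ => DownSplit (permVal σ) n := by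
    rw [hup]
    apply Finset.filter_congr
    intro σ hσ
    have hsplit := ((separable_iff σ).1 (mem_SEP.1 hσ)).upSplit_or_downSplit
      (fun i k hi hk => permVal_ne σ hi hk) n hn le_rfl
    exact ⟨fun h => hsplit.resolve_left h, fun h h' => h'.not_downSplit h⟩
  have hrev := sum_SEP_permReverse (fun σ => UpSplit (permVal σ) n) g
  simp only [hg, upSplit_permReverse, ← hdown] at hrev
  rw [two_mul]
  nth_rewrite 1 [hrev]
  rw [hup, Finset.sum_filter_add_sum_filter_not]

theorem indecSEP_one : indecSEP 1 = SEP 1 := by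
  apply Finset.filter_true_of_mem
  intro σ _
  exact le_antisymm (Bplus_le one_pos σ) (Bplus_spec one_pos σ).1.1

theorem two_mul_sum_beginDescent {n : ℕ} (hn : 2 ≤ n) :
    2 * ∑ σ ∈ SEP n, (beginDescent σ : ℝ) = (SEP n).card := by
  have h : ∑ σ ∈ SEP n, (beginDescent σ : ℝ) = ∑ σ ∈ SEP n, (1 - beginDescent σ : ℝ) := by
    apply Finset.sum_bij' (fun σ _ => permCompl σ) (fun σ _ => permCompl σ)
    · intro σ hσ
      rw [mem_SEP] at hσ ⊢
      exact hσ.permCompl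
    · intro σ hσ
      rw [mem_SEP] at hσ ⊢
      exact hσ.permCompl
    · intros; exact permCompl_permCompl _
    · intros; exact permCompl_permCompl _
    · intro σ _
      have h0 := permVal_lt σ (show 0 < n by omega)
      have h1 := permVal_lt σ (show 1 < n by omega)
      have hne := permVal_ne σ (show 0 < n by omega) (show 1 < n by omega) zero_ne_one
      rw [beginDescent, beginDescent, permVal_permCompl σ (by omega),
        permVal_permCompl σ (by omega)]
      rcases lt_or_gt_of_ne hne with hlt | hlt
      · rw [if_neg (by omega), if_pos (by omega)]; simp
      · rw [if_pos (by omega), if_neg (by omega)]; simp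
  rw [two_mul]
  nth_rewrite 2 [h]
  rw [← Finset.sum_add_distrib]
  simp

/-- The generating function of separable permutations. -/
noncomputable def sepSeries : PowerSeries ℝ := PowerSeries.mk fun n => ((SEP n).card : ℝ)

/-- The generating function of indecomposable separable permutations. -/
noncomputable def indecSeries : PowerSeries ℝ := PowerSeries.mk fun n => ((indecSEP n).card : ℝ)

/-- The generating function of peaks in separable permutations. -/
noncomputable def peakSeries : PowerSeries ℝ :=
  PowerSeries.mk fun n => ∑ σ ∈ SEP n, (numPeaks σ : ℝ)

/-- The generating function of peaks in indecomposable separable permutations. -/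
noncomputable def indecPeakSeries : PowerSeries ℝ :=
  PowerSeries.mk fun n => ∑ σ ∈ indecSEP n, (numPeaks σ : ℝ)

/-- The generating function of separable permutations beginning with a descent. -/
noncomputable def descentSeries : PowerSeries ℝ :=
  PowerSeries.mk fun n => ∑ σ ∈ SEP n, (beginDescent σ : ℝ)

theorem card_SEP_of_le_one {n : ℕ} (hn : n ≤ 1) : (SEP n).card = 1 := by
  have : SEP n = Finset.univ := by
    apply Finset.filter_true_of_mem
    intro σ _
    rw [separable_iff]
    intro a b c d _ _ _ _
    omega
  rw [this, Finset.card_univ, Fintype.card_perm, Fintype.card_fin]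
  interval_cases n <;> rfl

theorem numPeaks_of_le_one {n : ℕ} (hn : n ≤ 1) (σ : Equiv.Perm (Fin n)) : numPeaks σ = 0 := by
  rw [numPeaks, Finset.card_eq_zero]
  apply Finset.filter_false_of_mem
  omega

theorem beginDescent_of_le_one {n : ℕ} (hn : n ≤ 1) (σ : Equiv.Perm (Fin n)) :
    beginDescent σ = 0 := if_neg (by omega)

theorem sepSeries_eq : sepSeries = 1 + indecSeries * sepSeries := by
  ext n
  rw [map_add, PowerSeries.coeff_mul, PowerSeries.coeff_one]
  simp only [sepSeries, indecSeries, PowerSeries.coeff_mk]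
  rcases Nat.eq_zero_or_pos n with rfl | hn
  · simp [card_SEP_of_le_one, indecSEP_zero]
  · have := sum_SEP_eq_sum_antidiagonal hn fun _ _ => 1
    simp only [Finset.sum_const, nsmul_eq_mul, mul_one] at this
    rw [this, if_neg hn.ne', zero_add]

theorem two_mul_indecSeries : 2 * indecSeries + 1 = sepSeries + PowerSeries.X := by
  rw [two_mul]
  ext n
  simp only [map_add, PowerSeries.coeff_one, PowerSeries.coeff_X, sepSeries, indecSeries,
    PowerSeries.coeff_mk]
  obtain rfl | rfl | hn : n = 0 ∨ n = 1 ∨ 2 ≤ n := by omega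
  · simp [card_SEP_of_le_one, indecSEP_zero]
  · simp [card_SEP_of_le_one, indecSEP_one]
  · have := two_mul_sum_indecSEP hn (fun _ => 1) fun _ => rfl
    simp only [Finset.sum_const, nsmul_eq_mul, mul_one] at this
    rw [if_neg (by omega), if_neg (by omega)]
    linarith

theorem two_mul_indecPeakSeries : 2 * indecPeakSeries = peakSeries := by
  rw [two_mul]
  ext n
  simp only [map_add, peakSeries, indecPeakSeries, PowerSeries.coeff_mk]
  rcases Nat.lt_or_ge n 2 with hn | hn
  · simp [numPeaks_of_le_one (Nat.le_of_lt_succ hn)]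
  · rw [← two_mul]
    exact two_mul_sum_indecSEP hn _ fun σ => by rw [numPeaks_permReverse]

theorem two_mul_descentSeries : 2 * descentSeries + 1 + PowerSeries.X = sepSeries := by
  rw [two_mul]
  ext n
  simp only [map_add, PowerSeries.coeff_one, PowerSeries.coeff_X, sepSeries, descentSeries,
    PowerSeries.coeff_mk]
  obtain rfl | rfl | hn : n = 0 ∨ n = 1 ∨ 2 ≤ n := by omega
  · simp [card_SEP_of_le_one, beginDescent_of_le_one]
  · simp [card_SEP_of_le_one, beginDescent_of_le_one]
  · have := two_mul_sum_beginDescent hn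
    rw [if_neg (by omega), if_neg (by omega)]
    linarith

theorem peakSeries_eq : peakSeries =
    indecPeakSeries * sepSeries + indecSeries * peakSeries + indecSeries * descentSeries := by
  ext n
  simp only [map_add, PowerSeries.coeff_mul, sepSeries, indecSeries, peakSeries,
    indecPeakSeries, descentSeries, PowerSeries.coeff_mk, ← Finset.sum_add_distrib]
  rcases Nat.eq_zero_or_pos n with rfl | hn
  · simp [indecSEP_zero, numPeaks_of_le_one]
  · rw [sum_SEP_eq_sum_antidiagonal hn fun _ σ => (numPeaks σ : ℝ)]
    apply Finset.sum_congr rfl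
    rintro ⟨j, m⟩ -
    simp only
    rcases Nat.eq_zero_or_pos j with rfl | hj
    · simp [indecSEP_zero]
    · simp only [numPeaks_permSum hj, Nat.cast_add, Finset.sum_add_distrib, Finset.sum_const,
        nsmul_eq_mul, Finset.mul_sum, Finset.sum_mul]
      simp only [← Finset.mul_sum, ← Finset.sum_mul]
      ring

/-- The generating function of nonempty separable permutations. -/
noncomputable def posSepSeries : PowerSeries ℝ := sepSeries - 1

/-- The generating function of `1 + 2 * numPeaks σ` over nonempty separable permutations. -/
noncomputable def altSeries : PowerSeries ℝ := posSepSeries + (peakSeries + peakSeries)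

theorem posSepSeries_eq : posSepSeries =
    PowerSeries.X + PowerSeries.X * posSepSeries + posSepSeries * posSepSeries := by
  rw [posSepSeries]
  linear_combination 2 * sepSeries_eq + sepSeries * two_mul_indecSeries

theorem sqrt_mul_altSeries : (1 - PowerSeries.X - (posSepSeries + posSepSeries)) * altSeries =
    PowerSeries.X - PowerSeries.X * PowerSeries.X := by
  rw [altSeries, posSepSeries]
  linear_combination 4 * peakSeries_eq + 2 * sepSeries * two_mul_indecPeakSeries +
    2 * peakSeries * two_mul_indecSeries + 2 * indecSeries * two_mul_descentSeries +
    (sepSeries - 1 - PowerSeries.X) * two_mul_indecSeries + 2 * sepSeries_eq +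
    sepSeries * two_mul_indecSeries

theorem coeff_posSepSeries (n : ℕ) :
    PowerSeries.coeff n posSepSeries = if n = 0 then 0 else ((SEP n).card : ℝ) := by
  rw [posSepSeries, map_sub, PowerSeries.coeff_one, sepSeries, PowerSeries.coeff_mk]
  split_ifs with h
  · simp [h, card_SEP_of_le_one]
  · simp

theorem coeff_posSepSeries_nonneg (n : ℕ) : 0 ≤ PowerSeries.coeff n posSepSeries := by
  rw [coeff_posSepSeries]; split_ifs <;> positivity

theorem coeff_altSeries_zero : PowerSeries.coeff 0 altSeries = 0 := by
  rw [altSeries, map_add, coeff_posSepSeries, map_add, peakSeries, PowerSeries.coeff_mk]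
  simp [numPeaks_of_le_one]

theorem coeff_altSeries_succ (n : ℕ) : PowerSeries.coeff (n + 1) altSeries =
    ∑ σ ∈ SEP (n + 1), (altTypeLen σ true false : ℝ) := by
  rw [altSeries, map_add, coeff_posSepSeries, map_add, peakSeries, PowerSeries.coeff_mk,
    if_neg (by omega)]
  simp only [altTypeLen_true_false (Nat.succ_pos n), Nat.cast_add, Nat.cast_mul,
    Finset.sum_add_distrib, ← Finset.mul_sum, Finset.sum_const, nsmul_eq_mul]
  push_cast
  ring

theorem card_mul_indecExp (n : ℕ) : ((SEP (n + 1)).card : ℝ) *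
    indecExp (n + 1) (fun σ => (altTypeLen σ true false : ℝ)) =
      PowerSeries.coeff (n + 1) altSeries := by
  rw [coeff_altSeries_succ, indecExp, ← indecSEP]
  rcases Nat.eq_zero_or_pos n with rfl | hn
  · rw [indecSEP_one, card_SEP_of_le_one le_rfl]
    simp
  · have h1 := two_mul_sum_indecSEP (show 2 ≤ n + 1 by omega) (fun _ => 1) fun _ => rfl
    have h2 := two_mul_sum_indecSEP (show 2 ≤ n + 1 by omega)
      (fun σ => (altTypeLen σ true false : ℝ)) fun σ => by
        simp only [altTypeLen_true_false (Nat.succ_pos n), numPeaks_permReverse]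
    simp only [Finset.sum_const, nsmul_eq_mul, mul_one] at h1
    rw [← h1, ← h2]
    rcases eq_or_ne ((indecSEP (n + 1)).card : ℝ) 0 with h | h
    · rw [Nat.cast_eq_zero, Finset.card_eq_zero] at h
      simp [h]
    · field_simp

theorem abs_coeff_altSeries_le (n : ℕ) : |PowerSeries.coeff n altSeries| ≤
    (1 + 2 * n) * PowerSeries.coeff n posSepSeries := by
  rcases n with _ | n
  · simp [coeff_altSeries_zero, coeff_posSepSeries]
  · rw [coeff_altSeries_succ, coeff_posSepSeries, if_neg (by omega),
      abs_of_nonneg (Finset.sum_nonneg fun _ _ => Nat.cast_nonneg _), mul_comm,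
      ← nsmul_eq_mul]
    apply Finset.sum_le_card_nsmul
    intro σ _
    rw [altTypeLen_true_false (Nat.succ_pos n)]
    have : numPeaks σ ≤ n + 1 := (Finset.card_filter_le _ _).trans (by simp)
    have : (numPeaks σ : ℝ) ≤ ((n + 1 : ℕ) : ℝ) := by exact_mod_cast this
    push_cast at *
    linarith

/-- The power series `F` converges absolutely at `t`, with sum `v`. -/
def HasEval (F : PowerSeries ℝ) (t v : ℝ) : Prop :=
  (Summable fun n => ‖PowerSeries.coeff n F * t ^ n‖) ∧
    HasSum (fun n => PowerSeries.coeff n F * t ^ n) v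

theorem HasEval.add {F G : PowerSeries ℝ} {t v w : ℝ} (hF : HasEval F t v)
    (hG : HasEval G t w) : HasEval (F + G) t (v + w) := by
  simp only [HasEval, map_add, add_mul]
  refine ⟨?_, hF.2.add hG.2⟩
  exact (hF.1.add hG.1).of_nonneg_of_le (fun _ => norm_nonneg _) fun _ => norm_add_le _ _

theorem HasEval.neg {F : PowerSeries ℝ} {t v : ℝ} (hF : HasEval F t v) :
    HasEval (-F) t (-v) := by
  simp only [HasEval, map_neg, neg_mul, norm_neg]
  exact ⟨hF.1, hF.2.neg⟩

theorem HasEval.sub {F G : PowerSeries ℝ} {t v w : ℝ} (hF : HasEval F t v)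
    (hG : HasEval G t w) : HasEval (F - G) t (v - w) := by
  rw [sub_eq_add_neg, sub_eq_add_neg]
  exact hF.add hG.neg

theorem HasEval.mul {F G : PowerSeries ℝ} {t v w : ℝ} (hF : HasEval F t v)
    (hG : HasEval G t w) : HasEval (F * G) t (v * w) := by
  have h : ∀ n, PowerSeries.coeff n (F * G) * t ^ n =
      ∑ p ∈ Finset.HasAntidiagonal.antidiagonal n,
        (PowerSeries.coeff p.1 F * t ^ p.1) * (PowerSeries.coeff p.2 G * t ^ p.2) := by
    intro n
    rw [PowerSeries.coeff_mul, Finset.sum_mul]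
    apply Finset.sum_congr rfl
    intro p hp
    rw [← Finset.HasAntidiagonal.mem_antidiagonal.1 hp, pow_add]
    ring
  have hs := summable_norm_sum_mul_antidiagonal_of_summable_norm hF.1 hG.1
  simp only [HasEval, h]
  refine ⟨hs, ?_⟩
  have := tsum_mul_tsum_eq_tsum_sum_antidiagonal_of_summable_norm hF.1 hG.1
  rw [hF.2.tsum_eq, hG.2.tsum_eq] at this
  rw [this]
  exact hs.of_norm.hasSum

theorem HasEval.monomial (k : ℕ) (t : ℝ) : HasEval (PowerSeries.X ^ k) t (t ^ k) := by
  have h : ∀ n, n ≠ k → PowerSeries.coeff n (PowerSeries.X ^ k : PowerSeries ℝ) * t ^ n = 0 := by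
    intro n hn
    rw [PowerSeries.coeff_X_pow, if_neg hn, zero_mul]
  constructor
  · apply summable_of_ne_finset_zero (s := {k})
    intro n hn
    rw [h n (by simpa using hn), norm_zero]
  · convert hasSum_single k h using 1
    simp [PowerSeries.coeff_X_pow]

theorem HasEval.unique {F : PowerSeries ℝ} {t v w : ℝ} (hF : HasEval F t v)
    (hG : HasEval F t w) : v = w := hF.2.unique hG.2

theorem sum_coeff_mul_self_le {F : PowerSeries ℝ} (hF : ∀ n, 0 ≤ PowerSeries.coeff n F)
    (h0 : PowerSeries.coeff 0 F = 0) {r : ℝ} (hr : 0 ≤ r) (N : ℕ) :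
    ∑ n ∈ Finset.range (N + 1), PowerSeries.coeff n (F * F) * r ^ n ≤
      (∑ n ∈ Finset.range N, PowerSeries.coeff n F * r ^ n) ^ 2 := by
  rw [sq, Finset.sum_mul_sum, ← Finset.sum_product']
  refine le_trans (le_of_eq ?_) (Finset.sum_fiberwise_le_sum_of_sum_fiber_nonneg
    (t := Finset.range (N + 1)) (g := fun p : ℕ × ℕ => p.1 + p.2) ?_)
  · apply Finset.sum_congr rfl
    intro n hn
    rw [Finset.mem_range] at hn
    rw [PowerSeries.coeff_mul, Finset.sum_mul]
    symm
    trans ∑ p ∈ Finset.HasAntidiagonal.antidiagonal n,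
      (PowerSeries.coeff p.1 F * r ^ p.1) * (PowerSeries.coeff p.2 F * r ^ p.2)
    · apply Finset.sum_subset
      · intro p hp
        simp only [Finset.mem_filter] at hp
        exact Finset.HasAntidiagonal.mem_antidiagonal.2 hp.2
      · rintro ⟨i, j⟩ hp hp'
        rw [Finset.HasAntidiagonal.mem_antidiagonal] at hp
        simp only [Finset.mem_filter, Finset.mem_product, Finset.mem_range] at hp hp'
        obtain rfl | rfl : i = 0 ∨ j = 0 := by omega
        · simp [h0]
        · simp [h0]
    · apply Finset.sum_congr rfl
      intro p hp
      rw [← Finset.HasAntidiagonal.mem_antidiagonal.1 hp, pow_add]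
      ring
  · intro n _
    apply Finset.sum_nonneg
    intro p _
    have := hF p.1
    have := hF p.2
    positivity

theorem sum_coeff_posSepSeries_le {r x : ℝ} (hr : 0 ≤ r) (hx : 0 ≤ x)
    (hrx : r + r * x + x ^ 2 ≤ x) (N : ℕ) :
    ∑ n ∈ Finset.range N, PowerSeries.coeff n posSepSeries * r ^ n ≤ x := by
  induction N with
  | zero => simpa
  | succ N ih =>
    have hnonneg : 0 ≤ ∑ n ∈ Finset.range N, PowerSeries.coeff n posSepSeries * r ^ n :=
      Finset.sum_nonneg fun n _ => mul_nonneg (coeff_posSepSeries_nonneg n) (pow_nonneg hr n)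
    have hX : ∑ n ∈ Finset.range (N + 1),
        PowerSeries.coeff n (PowerSeries.X : PowerSeries ℝ) * r ^ n ≤ r := by
      simp only [PowerSeries.coeff_X, ite_mul, one_mul, zero_mul, Finset.sum_ite_eq']
      split_ifs <;> simp [hr]
    have hXF : ∑ n ∈ Finset.range (N + 1),
        PowerSeries.coeff n (PowerSeries.X * posSepSeries) * r ^ n =
        r * ∑ n ∈ Finset.range N, PowerSeries.coeff n posSepSeries * r ^ n := by
      rw [Finset.sum_range_succ', Finset.mul_sum]
      simp only [PowerSeries.coeff_succ_X_mul, PowerSeries.coeff_zero_X_mul, zero_mul, add_zero]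
      apply Finset.sum_congr rfl
      intros
      ring
    have hFF := sum_coeff_mul_self_le coeff_posSepSeries_nonneg
      (by rw [coeff_posSepSeries, if_pos rfl]) hr N
    rw [posSepSeries_eq]
    simp only [map_add, add_mul, Finset.sum_add_distrib]
    rw [hXF]
    nlinarith [pow_le_pow_left₀ hnonneg ih 2, mul_le_mul_of_nonneg_left ih hr]

theorem discr_pos {r : ℝ} (hr : r < 3 - 2 * Real.sqrt 2) : 0 < r ^ 2 - 6 * r + 1 := by
  have h2 : Real.sqrt 2 ^ 2 = 2 := Real.sq_sqrt (by norm_num)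
  nlinarith [Real.sqrt_nonneg 2]

theorem sum_coeff_posSepSeries_le_root {r : ℝ} (hr0 : 0 ≤ r) (hr : r < 3 - 2 * Real.sqrt 2)
    (N : ℕ) : ∑ n ∈ Finset.range N, PowerSeries.coeff n posSepSeries * r ^ n ≤
      (1 - r - Real.sqrt (r ^ 2 - 6 * r + 1)) / 2 := by
  have hd := Real.sq_sqrt (discr_pos hr).le
  have hr1 : r < 1 := by
    have : (1 : ℝ) ≤ Real.sqrt 2 := Real.one_le_sqrt.2 (by norm_num)
    linarith
  apply sum_coeff_posSepSeries_le hr0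
  · have := Real.sqrt_le_sqrt (show r ^ 2 - 6 * r + 1 ≤ (1 - r) ^ 2 by nlinarith)
    rw [Real.sqrt_sq (by linarith)] at this
    linarith
  · nlinarith

theorem exists_hasEval_posSepSeries {t : ℝ} (ht : |t| < 3 - 2 * Real.sqrt 2) :
    ∃ v, HasEval posSepSeries t v ∧
      v ≤ (1 - |t| - Real.sqrt (|t| ^ 2 - 6 * |t| + 1)) / 2 := by
  have hnonneg : ∀ n, 0 ≤ PowerSeries.coeff n posSepSeries * |t| ^ n := fun n =>
    mul_nonneg (coeff_posSepSeries_nonneg n) (pow_nonneg (abs_nonneg t) n)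
  have hle := sum_coeff_posSepSeries_le_root (abs_nonneg t) ht
  have hs : Summable fun n => PowerSeries.coeff n posSepSeries * |t| ^ n :=
    summable_of_sum_range_le hnonneg hle
  have hnorm : ∀ n, ‖PowerSeries.coeff n posSepSeries * t ^ n‖ =
      PowerSeries.coeff n posSepSeries * |t| ^ n := fun n => by
    rw [norm_mul, norm_pow, Real.norm_eq_abs, Real.norm_eq_abs,
      abs_of_nonneg (coeff_posSepSeries_nonneg n)]
  have hs' : Summable fun n => ‖PowerSeries.coeff n posSepSeries * t ^ n‖ := by
    simpa only [hnorm] using hs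
  refine ⟨_, ⟨hs', hs'.of_norm.hasSum⟩, ?_⟩
  refine (hs'.of_norm.tsum_le_tsum (fun n => ?_) hs).trans
    (Real.tsum_le_of_sum_range_le hnonneg hle)
  rw [← hnorm]
  exact le_abs_self _

theorem exists_hasEval_altSeries {t : ℝ} (ht : |t| < 3 - 2 * Real.sqrt 2) :
    ∃ g, HasEval altSeries t g := by
  obtain ⟨ρ, htρ, hρ⟩ := exists_between ht
  have hρ0 : 0 < ρ := (abs_nonneg t).trans_lt htρ
  have hnonneg : ∀ n, 0 ≤ PowerSeries.coeff n posSepSeries * ρ ^ n := fun n =>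
    mul_nonneg (coeff_posSepSeries_nonneg n) (pow_nonneg hρ0.le n)
  have hbound : ∀ n, PowerSeries.coeff n posSepSeries * ρ ^ n ≤ 1 := by
    intro n
    have h1 := Finset.single_le_sum (fun n _ => hnonneg n) (Finset.self_mem_range_succ n)
    have h2 := sum_coeff_posSepSeries_le_root hρ0.le hρ (n + 1)
    have := Real.sqrt_nonneg (ρ ^ 2 - 6 * ρ + 1)
    linarith
  have hq : ‖|t| / ρ‖ < 1 := by
    rw [Real.norm_of_nonneg (by positivity), div_lt_one hρ0]
    exact htρ
  have hsum : Summable fun n : ℕ => (|t| / ρ) ^ n + 2 * ((n : ℝ) ^ 1 * (|t| / ρ) ^ n) :=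
    (summable_geometric_of_norm_lt_one hq).add
      ((summable_pow_mul_geometric_of_norm_lt_one 1 hq).mul_left 2)
  have hs : Summable fun n => ‖PowerSeries.coeff n altSeries * t ^ n‖ := by
    refine hsum.of_nonneg_of_le (fun n => norm_nonneg _) fun n => ?_
    rw [norm_mul, norm_pow, Real.norm_eq_abs, Real.norm_eq_abs]
    calc |PowerSeries.coeff n altSeries| * |t| ^ n
        ≤ ((1 + 2 * n) * PowerSeries.coeff n posSepSeries) * |t| ^ n := by
          gcongr; exact abs_coeff_altSeries_le n
      _ = (PowerSeries.coeff n posSepSeries * ρ ^ n) * ((1 + 2 * n) * (|t| / ρ) ^ n) := by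
          rw [div_pow]; field_simp
      _ ≤ 1 * ((1 + 2 * n) * (|t| / ρ) ^ n) := by
          gcongr; exact hbound n
      _ = _ := by ring
  exact ⟨_, hs, hs.of_norm.hasSum⟩

/-- The generating function `G^{+,-}(t) = ∑_{n≥1} sₙ cₙ^{+,-} tⁿ = t(1-t)/√(t² - 6t + 1)`
for `|t| < 3 - 2√2`, where `cₙ^{+,-}` is the mean of `Aₙ^{+,-}` over indecomposable
separable permutations of `[n]`. -/
theorem genfun_G_pm (t : ℝ) (ht : |t| < 3 - 2 * Real.sqrt 2) :
    HasSum (fun n : ℕ => ((SEP (n + 1)).card : ℝ) *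
        indecExp (n + 1) (fun σ => (altTypeLen σ true false : ℝ)) * t ^ (n + 1))
      (t * (1 - t) / Real.sqrt (t ^ 2 - 6 * t + 1)) := by
  obtain ⟨v, hv, hvle⟩ := exists_hasEval_posSepSeries ht
  obtain ⟨g, hg⟩ := exists_hasEval_altSeries ht
  have hX := HasEval.monomial 1 t
  have h1 := HasEval.monomial 0 t
  rw [pow_one, pow_one] at hX
  rw [pow_zero, pow_zero] at h1
  have hveq : v = t + t * v + v * v :=
    hv.unique (by
      have := (hX.add (hX.mul hv)).add (hv.mul hv)
      rwa [← posSepSeries_eq] at this)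
  have hgeq : (1 - t - (v + v)) * g = t - t * t :=
    HasEval.unique (((h1.sub hX).sub (hv.add hv)).mul hg)
      (by rw [sqrt_mul_altSeries]; exact hX.sub (hX.mul hX))
  have hpos : 0 < 1 - t - (v + v) := by
    have := Real.sqrt_pos.2 (discr_pos ht)
    have := le_abs_self t
    linarith
  have hsqrt : Real.sqrt (t ^ 2 - 6 * t + 1) = 1 - t - (v + v) := by
    rw [Real.sqrt_eq_iff_mul_self_eq_of_pos hpos]
    linear_combination -4 * hveq
  have hgval : t * (1 - t) / Real.sqrt (t ^ 2 - 6 * t + 1) = g := by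
    rw [hsqrt, div_eq_iff hpos.ne']
    linear_combination -hgeq
  rw [hgval]
  simp only [card_mul_indecExp]
  have := (hasSum_nat_add_iff' 1).2 hg.2
  simpa [coeff_altSeries_zero] using this
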